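/- Let (g_1,…,g_5) be a 5-tuple of order-2 elements of the alternating group A6 on 6 letters with g_1 g_2 g_3 g_4 g_5 = 1, and suppose the subgroup G generated by g_1,…,g_5 acts transitively on the 6 letters. Then the order of G is 24, 60, or 360 (and in the last case G = A6). Moreover, any two such 5-tuples whose generated subgroups have equal order are related by the equivalence relation generated by the Hurwitz moves together with simultaneous conjugation of all entries by a single element of the symmetric group S6. -/

import Mathlib

/-- The `i`-th Hurwitz move on `k`-tuples of elements of a group `G`:
`(g₁,…,gₖ) ↦ (g₁,…,g_{i-1}, g_{i+1}, g_{i+1}⁻¹ g_i g_{i+1}, g_{i+2},…,gₖ)`. -/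
def HurwitzMove {G : Type*} [Group G] {k : ℕ} (g h : Fin k → G) : Prop :=
  ∃ i : ℕ, ∃ hi : i + 1 < k,
    h ⟨i, Nat.lt_of_succ_lt hi⟩ = g ⟨i + 1, hi⟩ ∧
    h ⟨i + 1, hi⟩ = (g ⟨i + 1, hi⟩)⁻¹ * g ⟨i, Nat.lt_of_succ_lt hi⟩ * g ⟨i + 1, hi⟩ ∧
    ∀ j : Fin k, (j : ℕ) ≠ i → (j : ℕ) ≠ i + 1 → h j = g j

/-- Hurwitz equivalence: the equivalence relation generated by the Hurwitz moves. -/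
def HurwitzEquiv {G : Type*} [Group G] {k : ℕ} (g h : Fin k → G) : Prop :=
  Relation.EqvGen HurwitzMove g h

/-- The Nielsen class `Ni(A₆, C_{2×2}^k)`: `k`-tuples of order-2 elements of `A₆`
(products of two disjoint transpositions) with product `1` generating `A₆`. -/
def NielsenSet (k : ℕ) : Set (Fin k → Equiv.Perm (Fin 6)) :=
  {g | (∀ i, g i ∈ alternatingGroup (Fin 6)) ∧ (∀ i, orderOf (g i) = 2) ∧
       (List.ofFn g).prod = 1 ∧
       Subgroup.closure (Set.range g) = alternatingGroup (Fin 6)}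

/-- One step of the absolute equivalence: a Hurwitz move, or simultaneous
conjugation of all entries by a single element of `S₆`. -/
def AbsRel (k : ℕ) (g h : Fin k → Equiv.Perm (Fin 6)) : Prop :=
  HurwitzMove g h ∨ ∃ s : Equiv.Perm (Fin 6), h = fun i => s⁻¹ * g i * s

/-- One step of the inner equivalence: a Hurwitz move, or simultaneous
conjugation of all entries by a single element of `A₆`. -/
def InnerRel (k : ℕ) (g h : Fin k → Equiv.Perm (Fin 6)) : Prop :=
  HurwitzMove g h ∨
    ∃ s ∈ alternatingGroup (Fin 6), h = fun i => s⁻¹ * g i * s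

/-- The set of fixed points of a permutation. -/
def FixedPts {n : ℕ} (g : Equiv.Perm (Fin n)) : Set (Fin n) := {x | g x = x}

/-!
Up to conjugation only few triples of even involutions of six letters occur, and braiding the first
three entries of an admissible quintuple produces two adjacent entries whose product has order at
most three. Since the total product is one, the product of the other three entries has the same
order. Braiding those three then produces two adjacent entries that commute, and a third round
produces either two equal adjacent entries or one particular triple, `linkedTriple`. A quintuple
`(a, a, b, c, d)` has `b * c * d = 1`, so transitivity leaves only two possibilities for it, which
generate the rotation groups of the octahedron and of the icosahedron. The quintuples that extend
`linkedTriple` are all equivalent, and they generate `A₆` by Jordan's theorem: the group is doubly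
transitive and contains a three-cycle.
-/

section Braid

open Matrix (vecCons)

variable {G : Type*} [Group G] {k : ℕ}

namespace HurwitzMove

theorem cons_cons (a b : G) (u : Fin k → G) :
    HurwitzMove (vecCons a (vecCons b u)) (vecCons b (vecCons (b⁻¹ * a * b) u)) := by
  refine ⟨0, by omega, rfl, rfl, fun j h₀ h₁ => ?_⟩
  obtain ⟨j, rfl⟩ := Fin.exists_succ_eq_of_ne_zero (x := j) (fun h => h₀ (by simp [h]))
  obtain ⟨j, rfl⟩ := Fin.exists_succ_eq_of_ne_zero (x := j) (fun h => h₁ (by simp [h]))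
  rfl

theorem cons (a : G) {g h : Fin k → G} (move : HurwitzMove g h) :
    HurwitzMove (vecCons a g) (vecCons a h) := by
  obtain ⟨i, hi, h_fst, h_snd, h_rest⟩ := move
  refine ⟨i + 1, by omega, h_fst, h_snd, fun j => ?_⟩
  cases j using Fin.cases with
  | zero => simp
  | succ j => simpa using h_rest j

@[elab_as_elim]
theorem induction_on {motive : ∀ {k : ℕ} (g h : Fin k → G), HurwitzMove g h → Prop}
    {g h : Fin k → G} (move : HurwitzMove g h)
    (head : ∀ {k : ℕ} (a b : G) (u : Fin k → G), motive _ _ (.cons_cons a b u))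
    (tail : ∀ {k : ℕ} (a : G) {g h : Fin k → G} (move : HurwitzMove g h),
      motive g h move → motive _ _ (move.cons a)) :
    motive g h move := by
  obtain ⟨i, hi, h_fst, h_snd, h_rest⟩ := move
  induction i generalizing k with
  | zero =>
    obtain ⟨k, rfl⟩ : ∃ m, k = m + 2 := ⟨k - 2, by omega⟩
    obtain ⟨a, b, u, rfl⟩ : ∃ a b u, g = vecCons a (vecCons b u) :=
      ⟨g 0, g 1, fun j => g j.succ.succ,
        funext <| Fin.cases rfl <| Fin.cases rfl fun _ => rfl⟩
    obtain rfl : h = vecCons b (vecCons (b⁻¹ * a * b) u) := by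
      ext j
      exact Fin.cases h_fst (Fin.cases h_snd fun j => h_rest j.succ.succ (by simp) (by simp)) j
    exact head a b u
  | succ i ih =>
    obtain ⟨k, rfl⟩ : ∃ m, k = m + 1 := ⟨k - 1, by omega⟩
    obtain ⟨a, g, rfl⟩ : ∃ a u, g = vecCons a u := ⟨_, _, (Matrix.cons_head_tail g).symm⟩
    obtain ⟨b, h, rfl⟩ : ∃ a u, h = vecCons a u := ⟨_, _, (Matrix.cons_head_tail h).symm⟩
    obtain rfl : b = a := h_rest 0 (by simp) (by simp)
    have tail_rest (j : Fin k) (hj : (j : ℕ) ≠ i) (hj' : (j : ℕ) ≠ i + 1) : h j = g j :=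
      h_rest j.succ (by simpa using hj) (by simpa using hj')
    exact tail b ⟨i, by omega, h_fst, h_snd, tail_rest⟩ (ih _ h_fst h_snd tail_rest)

theorem prod_ofFn_eq {g h : Fin k → G} (move : HurwitzMove g h) :
    (List.ofFn h).prod = (List.ofFn g).prod := by
  induction move using induction_on with
  | head a b u => simp [mul_assoc]
  | tail a _ ih => simp [ih]

theorem closure_range_eq {g h : Fin k → G} (move : HurwitzMove g h) :
    Subgroup.closure (Set.range h) = Subgroup.closure (Set.range g) := by
  induction move using induction_on with
  | head a b u =>
    simp only [Matrix.range_cons, ← Set.union_assoc, Subgroup.closure_union _ (Set.range u)]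
    congr 1
    apply le_antisymm <;> rw [Subgroup.closure_le] <;> rintro x (rfl | rfl)
    · exact Subgroup.subset_closure (by simp)
    · have ha : a ∈ Subgroup.closure ({a} ∪ {b}) := Subgroup.subset_closure (by simp)
      have hb : b ∈ Subgroup.closure ({a} ∪ {b}) := Subgroup.subset_closure (by simp)
      exact mul_mem (mul_mem (inv_mem hb) ha) hb
    · have hb : b ∈ Subgroup.closure ({b} ∪ {b⁻¹ * x * b}) := Subgroup.subset_closure (by simp)
      have hx : b⁻¹ * x * b ∈ Subgroup.closure ({b} ∪ {b⁻¹ * x * b}) :=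
        Subgroup.subset_closure (by simp)
      simpa [mul_assoc] using mul_mem (mul_mem hb hx) (inv_mem hb)
    · exact Subgroup.subset_closure (by simp)
  | tail a _ ih => simp only [Matrix.range_cons, Subgroup.closure_union, ih]

theorem forall_iff {P : G → Prop} (hP : ∀ x s, P (s⁻¹ * x * s) ↔ P x)
    {g h : Fin k → G} (move : HurwitzMove g h) : (∀ i, P (h i)) ↔ ∀ i, P (g i) := by
  induction move using induction_on with
  | head a b u => simp [Fin.forall_fin_succ, hP, and_left_comm]
  | tail a _ ih => simp [Fin.forall_fin_succ, ih]

end HurwitzMove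

namespace HurwitzEquiv

theorem trans {f g h : Fin k → G} (hfg : HurwitzEquiv f g) (hgh : HurwitzEquiv g h) :
    HurwitzEquiv f h :=
  Relation.EqvGen.trans _ _ _ hfg hgh

theorem cons_cons (a b : G) (u : Fin k → G) :
    HurwitzEquiv (vecCons a (vecCons b u)) (vecCons b (vecCons (b⁻¹ * a * b) u)) :=
  .rel _ _ (.cons_cons a b u)

theorem cons (a : G) {g h : Fin k → G} (equiv : HurwitzEquiv g h) :
    HurwitzEquiv (vecCons a g) (vecCons a h) := by
  induction equiv with
  | rel _ _ move => exact .rel _ _ (move.cons a)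
  | refl _ => exact .refl _
  | symm _ _ _ ih => exact .symm _ _ ih
  | trans _ _ _ _ _ ih ih' => exact Relation.EqvGen.trans _ _ _ ih ih'

theorem cons_snoc (a : G) (u : Fin k → G) :
    HurwitzEquiv (vecCons a u)
      (Fin.snoc u ((List.ofFn u).prod⁻¹ * a * (List.ofFn u).prod) : Fin (k + 1) → G) := by
  induction k generalizing a with
  | zero =>
    have h_eq : vecCons a u = (Fin.snoc u ((List.ofFn u).prod⁻¹ * a * (List.ofFn u).prod) :
        Fin 1 → G) := by
      ext i; fin_cases i; simp [Fin.snoc]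
    exact h_eq ▸ .refl _
  | succ k ih =>
    obtain ⟨b, u, rfl⟩ : ∃ b v, u = vecCons b v :=
      ⟨_, _, (Matrix.cons_head_tail u).symm⟩
    refine (cons_cons a b u).trans ?_
    convert (ih (b⁻¹ * a * b) u).cons b using 1
    rw [vecCons, vecCons, ← Fin.cons_snoc_eq_snoc_cons]
    simp [mul_assoc]

theorem rotate (a : G) (u : Fin k → G) (h : (List.ofFn (vecCons a u)).prod = 1) :
    HurwitzEquiv (vecCons a u) (Fin.snoc u a : Fin (k + 1) → G) := by
  have hu : (List.ofFn u).prod = a⁻¹ := by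
    simpa [eq_comm, inv_eq_iff_mul_eq_one] using h
  simpa [hu] using cons_snoc a u

end HurwitzEquiv

end Braid

section AbsoluteEquivalence

open Equiv

variable {k : ℕ}

/-- Absolute equivalence of tuples: Hurwitz equivalence up to simultaneous conjugation in `S₆`. -/
def AbsEquiv (g h : Fin k → Perm (Fin 6)) : Prop := Relation.EqvGen (AbsRel k) g h

namespace AbsEquiv

theorem symm {g h : Fin k → Perm (Fin 6)} (hgh : AbsEquiv g h) : AbsEquiv h g :=
  Relation.EqvGen.symm _ _ hgh

theorem trans {f g h : Fin k → Perm (Fin 6)} (hfg : AbsEquiv f g) (hgh : AbsEquiv g h) :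
    AbsEquiv f h :=
  Relation.EqvGen.trans _ _ _ hfg hgh

theorem conj (s : Perm (Fin 6)) (g : Fin k → Perm (Fin 6)) :
    AbsEquiv g (fun i => s⁻¹ * g i * s) :=
  .rel _ _ (.inr ⟨s, rfl⟩)

theorem congr_of_absRel {α : Type*} {f : (Fin k → Perm (Fin 6)) → α}
    (hf : ∀ {g h}, AbsRel k g h → f g = f h) {g h : Fin k → Perm (Fin 6)} (hgh : AbsEquiv g h) :
    f g = f h :=
  (eq_equivalence.comap f).eqvGen_iff.mp (hgh.mono fun _ _ => hf)

end AbsEquiv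

theorem HurwitzEquiv.absEquiv {g h : Fin k → Perm (Fin 6)} (hgh : HurwitzEquiv g h) :
    AbsEquiv g h :=
  hgh.mono fun _ _ => .inl

theorem closure_range_conj {G ι : Type*} [Group G] (s : G) (g : ι → G) :
    Subgroup.closure (Set.range fun i => s⁻¹ * g i * s) =
      (Subgroup.closure (Set.range g)).map (MulAut.conj s⁻¹).toMonoidHom := by
  rw [MonoidHom.map_closure, ← Set.range_comp]
  simp [Function.comp_def]

theorem AbsEquiv.card_closure_eq {g h : Fin k → Perm (Fin 6)} (hgh : AbsEquiv g h) :
    Nat.card (Subgroup.closure (Set.range g)) = Nat.card (Subgroup.closure (Set.range h)) := by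
  refine hgh.congr_of_absRel (f := fun g => Nat.card (Subgroup.closure (Set.range g))) ?_
  rintro g h (move | ⟨s, rfl⟩)
  · rw [move.closure_range_eq]
  · rw [closure_range_conj]
    exact (Subgroup.card_map_of_injective (MulAut.conj s⁻¹).injective).symm

/-- Even permutations of order two; on six letters these are the products of two disjoint
transpositions. -/
def IsEvenInvolution {α : Type*} [Fintype α] [DecidableEq α] (p : Perm α) : Prop :=
  p ≠ 1 ∧ p ^ 2 = 1 ∧ Perm.sign p = 1

instance {α : Type*} [Fintype α] [DecidableEq α] :
    DecidablePred (IsEvenInvolution (α := α)) :=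
  fun p => inferInstanceAs (Decidable (p ≠ 1 ∧ p ^ 2 = 1 ∧ Perm.sign p = 1))

theorem isEvenInvolution_conj_iff {α : Type*} [Fintype α] [DecidableEq α] (p s : Perm α) :
    IsEvenInvolution (s⁻¹ * p * s) ↔ IsEvenInvolution p := by
  have h_conj : s⁻¹ * p * s = MulAut.conj s⁻¹ p := by simp
  have h_sign : Perm.sign (MulAut.conj s⁻¹ p) = Perm.sign p := by
    rw [MulAut.conj_apply, map_mul, map_mul, mul_right_comm, ← map_mul, mul_inv_cancel, map_one,
      one_mul]
  simp only [IsEvenInvolution, h_conj, h_sign, ← map_pow, ne_eq, EmbeddingLike.map_eq_one_iff]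

/-- Tuples of even involutions of six letters with product one that generate a transitive group. -/
structure IsAdmissible (g : Fin k → Perm (Fin 6)) : Prop where
  isEvenInvolution (i : Fin k) : IsEvenInvolution (g i)
  prod_eq_one : (List.ofFn g).prod = 1
  exists_apply_eq (x y : Fin 6) : ∃ p ∈ Subgroup.closure (Set.range g), p x = y

theorem IsAdmissible.conj {g : Fin k → Perm (Fin 6)} (hg : IsAdmissible g) (s : Perm (Fin 6)) :
    IsAdmissible fun i => s⁻¹ * g i * s where
  isEvenInvolution i := (isEvenInvolution_conj_iff _ s).mpr (hg.isEvenInvolution i)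
  prod_eq_one := by
    have h := map_list_prod (MulAut.conj s⁻¹) (List.ofFn g)
    rw [hg.prod_eq_one, map_one, List.map_ofFn] at h
    simpa [Function.comp_def] using h.symm
  exists_apply_eq x y := by
    obtain ⟨p, hp, hpxy⟩ := hg.exists_apply_eq (s x) (s y)
    rw [closure_range_conj]
    exact ⟨_, Subgroup.mem_map_of_mem _ hp, by simp [hpxy]⟩

theorem AbsEquiv.isAdmissible_iff {g h : Fin k → Perm (Fin 6)} (hgh : AbsEquiv g h) :
    IsAdmissible g ↔ IsAdmissible h := by
  refine Eq.to_iff <| hgh.congr_of_absRel (f := IsAdmissible) ?_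
  rintro g h (move | ⟨s, rfl⟩) <;> refine propext ⟨fun hg => ?_, fun hh => ?_⟩
  · exact ⟨(move.forall_iff isEvenInvolution_conj_iff).mpr hg.1,
      move.prod_ofFn_eq ▸ hg.2, move.closure_range_eq ▸ hg.3⟩
  · exact ⟨(move.forall_iff isEvenInvolution_conj_iff).mp hh.1,
      move.prod_ofFn_eq ▸ hh.2, move.closure_range_eq ▸ hh.3⟩
  · exact hg.conj s
  · simpa [mul_assoc] using hh.conj s⁻¹

end AbsoluteEquivalence

section Triples

open Matrix (vecCons)

variable {G : Type*} {k : ℕ}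

/-- The tuple `(a, b, c, u₁, …, uₖ)` whose first three entries, on which braids act, are given as
the triple `(a, b, c)`. -/
def consTriple (t : G × G × G) (u : Fin k → G) : Fin (k + 3) → G :=
  vecCons t.1 (vecCons t.2.1 (vecCons t.2.2 u))

theorem exists_eq_consTriple (g : Fin (k + 3) → G) : ∃ t u, g = consTriple t u :=
  ⟨(g 0, g 1, g 2), fun i => g i.succ.succ.succ,
    funext <| Fin.cases rfl <| Fin.cases rfl <| Fin.cases rfl fun _ => rfl⟩

variable [Group G]

theorem prod_ofFn_consTriple (t : G × G × G) (u : Fin k → G) :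
    (List.ofFn (consTriple t u)).prod = t.1 * t.2.1 * t.2.2 * (List.ofFn u).prod := by
  simp [consTriple, mul_assoc]

/-- Simultaneous conjugation of the entries of a triple. -/
def conjTriple (s : G) (t : G × G × G) : G × G × G :=
  (s⁻¹ * t.1 * s, s⁻¹ * t.2.1 * s, s⁻¹ * t.2.2 * s)

theorem conj_consTriple (s : G) (t : G × G × G) (u : Fin k → G) :
    (fun i => s⁻¹ * consTriple t u i * s) =
      consTriple (conjTriple s t) fun i => s⁻¹ * u i * s :=
  funext <| Fin.cases rfl <| Fin.cases rfl <| Fin.cases rfl fun _ => rfl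

/-- The Hurwitz move on the first two entries of a triple. -/
def braidFst (t : G × G × G) : G × G × G := (t.2.1, t.2.1⁻¹ * t.1 * t.2.1, t.2.2)

/-- The Hurwitz move on the last two entries of a triple. -/
def braidSnd (t : G × G × G) : G × G × G := (t.1, t.2.2, t.2.2⁻¹ * t.2.1 * t.2.2)

/-- A part of the braid orbit of a triple, large enough for the finite searches below. -/
def braidTranslates (t : G × G × G) : List (G × G × G) :=
  (List.range 5).flatMap fun i => (List.range 3).map fun j => braidSnd^[j] (braidFst^[i] t)

theorem rel_iterate_of_equivalence {α : Type*} {r : α → α → Prop} (hr : Equivalence r) {f : α → α}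
    (hf : ∀ x, r x (f x)) (n : ℕ) (x : α) : r x (f^[n] x) := by
  induction n with
  | zero => exact hr.refl x
  | succ n ih => exact Function.iterate_succ_apply' f n x ▸ hr.trans ih (hf _)

namespace HurwitzEquiv

theorem braidFst_iterate (n : ℕ) (t : G × G × G) (u : Fin k → G) :
    HurwitzEquiv (consTriple t u) (consTriple (braidFst^[n] t) u) :=
  rel_iterate_of_equivalence (f := braidFst)
    ((Relation.EqvGen.is_equivalence HurwitzMove).comap fun t => consTriple t u)
    (fun t => cons_cons t.1 t.2.1 (vecCons t.2.2 u)) n t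

theorem braidSnd_iterate (n : ℕ) (t : G × G × G) (u : Fin k → G) :
    HurwitzEquiv (consTriple t u) (consTriple (braidSnd^[n] t) u) :=
  rel_iterate_of_equivalence (f := braidSnd)
    ((Relation.EqvGen.is_equivalence HurwitzMove).comap fun t => consTriple t u)
    (fun t => (cons_cons t.2.1 t.2.2 u).cons t.1) n t

theorem of_mem_braidTranslates {t t' : G × G × G} (h : t' ∈ braidTranslates t) (u : Fin k → G) :
    HurwitzEquiv (consTriple t u) (consTriple t' u) := by
  simp only [braidTranslates, List.mem_flatMap, List.mem_map] at h
  obtain ⟨i, -, j, -, rfl⟩ := h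
  exact (braidFst_iterate i t u).trans (braidSnd_iterate j _ u)

theorem rotate_consTriple {t : G × G × G} {u : Fin 2 → G}
    (h : (List.ofFn (consTriple t u)).prod = 1) :
    HurwitzEquiv (consTriple t u) (consTriple (t.2.2, u 0, u 1) ![t.1, t.2.1]) := by
  obtain ⟨a, b, c⟩ := t
  obtain ⟨d, e, rfl⟩ : ∃ d e, u = ![d, e] := ⟨_, _, (FinVec.etaExpand_eq u).symm⟩
  have rotate_fst : HurwitzEquiv ![a, b, c, d, e] ![b, c, d, e, a] := by
    convert rotate a ![b, c, d, e] h using 1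
    ext i; fin_cases i <;> rfl
  have rotate_snd : HurwitzEquiv ![b, c, d, e, a] ![c, d, e, a, b] := by
    convert rotate b ![c, d, e, a] ?_ using 1
    · ext i; fin_cases i <;> rfl
    · simpa [consTriple] using List.prod_rotate_eq_one_of_prod_eq_one h 1
  exact rotate_fst.trans rotate_snd

theorem consTriple_pull (t : G × G × G) (u : Fin 2 → G) :
    HurwitzEquiv (consTriple t u) (vecCons t.1 (vecCons (u 0)
      (consTriple ((u 0)⁻¹ * t.2.1 * u 0, (u 0)⁻¹ * t.2.2 * u 0, u 1) ![]))) := by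
  obtain ⟨d, e, rfl⟩ : ∃ d e, u = ![d, e] := ⟨_, _, (FinVec.etaExpand_eq u).symm⟩
  exact (((cons_cons t.2.2 d ![e]).cons t.2.1).cons t.1).trans
    ((cons_cons t.2.1 d ![d⁻¹ * t.2.2 * d, e]).cons t.1)

end HurwitzEquiv

end Triples

section Doubled

open Matrix (vecCons)

variable {G : Type*} [Group G]

/-- The tuple `(a, a, b, c, (bc)⁻¹)`, whose product is `a²`. -/
def doubled (t : G × G × G) : Fin 5 → G := ![t.1, t.1, t.2.1, t.2.2, (t.2.1 * t.2.2)⁻¹]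

/-- The effect on `(a, b, c)` of rotating the tail `(b, c, (bc)⁻¹)` of `doubled (a, b, c)`. -/
def cycleTail (t : G × G × G) : G × G × G := (t.1, t.2.2, (t.2.1 * t.2.2)⁻¹)

theorem conj_doubled (s : G) (t : G × G × G) :
    (fun i => s⁻¹ * doubled t i * s) = doubled (conjTriple s t) := by
  ext i; fin_cases i <;> simp [doubled, conjTriple, mul_assoc]

theorem HurwitzEquiv.doubled_cycleTail (t : G × G × G) :
    HurwitzEquiv (doubled t) (doubled (cycleTail t)) := by
  have h_rotate : HurwitzEquiv ![t.2.1, t.2.2, (t.2.1 * t.2.2)⁻¹]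
      ![t.2.2, (t.2.1 * t.2.2)⁻¹, t.2.1] := by
    convert rotate t.2.1 ![t.2.2, (t.2.1 * t.2.2)⁻¹] (by simp) using 1
    ext i; fin_cases i <;> rfl
  simpa [doubled, cycleTail] using (h_rotate.cons t.1).cons t.1

theorem HurwitzEquiv.doubled_cycleTail_iterate (n : ℕ) (t : G × G × G) :
    HurwitzEquiv (doubled t) (doubled (cycleTail^[n] t)) :=
  rel_iterate_of_equivalence (f := cycleTail)
    ((Relation.EqvGen.is_equivalence HurwitzMove).comap doubled) doubled_cycleTail n t

end Doubled

section WordOrbit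

open scoped Pointwise

variable {ι G X : Type*} [Group G] [MulAction G X] {g : ι → G}

theorem closure_range_le_stabilizer [DecidableEq X] {S : Finset X}
    (hS : ∀ i, ∀ x ∈ S, g i • x ∈ S) :
    Subgroup.closure (Set.range g) ≤ MulAction.stabilizer G S := by
  rw [Subgroup.closure_le]
  rintro _ ⟨i, rfl⟩
  exact MulAction.mem_stabilizer_finset'.mpr (hS i)

variable [Fintype ι] [DecidableEq G] [DecidableEq X]

/-- The points `w • x`, for `w` a word of length `n` in the entries of `g`. -/
def wordOrbit (g : ι → G) (n : ℕ) (x : X) : Finset X :=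
  (fun S => Finset.univ.image g • S)^[n] {x}

theorem wordOrbit_succ (g : ι → G) (n : ℕ) (x : X) :
    wordOrbit g (n + 1) x = Finset.univ.image g • wordOrbit g n x :=
  Function.iterate_succ_apply' _ n _

theorem wordOrbit_nonempty [Nonempty ι] (g : ι → G) (n : ℕ) (x : X) :
    (wordOrbit g n x).Nonempty := by
  induction n with
  | zero => exact Finset.singleton_nonempty x
  | succ n ih => exact wordOrbit_succ g n x ▸ (Finset.univ_nonempty.image g).smul ih

theorem exists_mem_closure_smul_eq_of_mem_wordOrbit {n : ℕ} {x y : X} (hy : y ∈ wordOrbit g n x) :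
    ∃ p ∈ Subgroup.closure (Set.range g), p • x = y := by
  induction n generalizing y with
  | zero => exact ⟨1, one_mem _, by simpa [wordOrbit, eq_comm] using hy⟩
  | succ n ih =>
    rw [wordOrbit_succ, Finset.mem_smul] at hy
    obtain ⟨s, hs, z, hz, rfl⟩ := hy
    obtain ⟨i, -, rfl⟩ := Finset.mem_image.mp hs
    obtain ⟨p, hp, rfl⟩ := ih hz
    exact ⟨g i * p, mul_mem (Subgroup.subset_closure ⟨i, rfl⟩) hp, mul_smul _ _ _⟩

theorem card_closure_range_eq_of_wordOrbit_subset [Nonempty ι] {n : ℕ}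
    (h_subset : wordOrbit g (n + 1) (1 : G) ⊆ wordOrbit g n 1) :
    Nat.card (Subgroup.closure (Set.range g)) = (wordOrbit g n (1 : G)).card := by
  have h_le : Subgroup.closure (Set.range g) ≤ MulAction.stabilizer G (wordOrbit g n (1 : G)) := by
    refine closure_range_le_stabilizer fun i p hp => h_subset ?_
    rw [wordOrbit_succ]
    exact Finset.smul_mem_smul (Finset.mem_image_of_mem g (Finset.mem_univ i)) hp
  have mem_closure {p : G} (hp : p ∈ wordOrbit g n (1 : G)) :
      p ∈ Subgroup.closure (Set.range g) := by
    obtain ⟨q, hq, rfl⟩ := exists_mem_closure_smul_eq_of_mem_wordOrbit hp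
    simpa using hq
  have mul_mem_wordOrbit {p q : G} (hp : p ∈ Subgroup.closure (Set.range g))
      (hq : q ∈ wordOrbit g n (1 : G)) : p * q ∈ wordOrbit g n (1 : G) :=
    MulAction.mem_stabilizer_finset'.mp (h_le hp) hq
  have h_eq : (Subgroup.closure (Set.range g) : Set G) = wordOrbit g n (1 : G) := by
    ext p
    refine ⟨fun hp => ?_, mem_closure⟩
    obtain ⟨q, hq⟩ := wordOrbit_nonempty g n (1 : G)
    simpa using mul_mem_wordOrbit (mul_mem hp (inv_mem (mem_closure hq))) hq
  rw [← SetLike.coe_sort_coe, h_eq, Nat.card_eq_card_toFinset, Finset.toFinset_coe]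

theorem isMultiplyPretransitive_closure_of_mem_wordOrbit {n : ℕ} {x₀ y₀ : X}
    (h : ∀ x y, x ≠ y → (x, y) ∈ wordOrbit g n (x₀, y₀)) :
    MulAction.IsMultiplyPretransitive (Subgroup.closure (Set.range g)) X 2 := by
  have exists_smul_eq {x y : X} (hxy : x ≠ y) :
      ∃ p : Subgroup.closure (Set.range g), p • x₀ = x ∧ p • y₀ = y := by
    obtain ⟨p, hp, h_eq⟩ := exists_mem_closure_smul_eq_of_mem_wordOrbit (h x y hxy)
    exact ⟨⟨p, hp⟩, Prod.mk.inj h_eq⟩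
  rw [MulAction.is_two_pretransitive_iff]
  intro a b c d hab hcd
  obtain ⟨p, rfl, rfl⟩ := exists_smul_eq hab
  obtain ⟨q, rfl, rfl⟩ := exists_smul_eq hcd
  exact ⟨q * p⁻¹, by simp [mul_smul], by simp [mul_smul]⟩

end WordOrbit

section Classification

open Equiv Equiv.Perm

theorem isEvenInvolution_of_orderOf_eq_two {α : Type*} [Fintype α] [DecidableEq α] {p : Perm α}
    (h_mem : p ∈ alternatingGroup α) (h_ord : orderOf p = 2) : IsEvenInvolution p :=
  ⟨(orderOf_eq_prime_iff.mp h_ord).2, (orderOf_eq_prime_iff.mp h_ord).1,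
    mem_alternatingGroup.mp h_mem⟩

namespace IsEvenInvolution

variable {α : Type*} [Fintype α] [DecidableEq α] {p q : Perm α}

theorem inv_eq (hp : IsEvenInvolution p) : p⁻¹ = p :=
  inv_eq_of_mul_eq_one_right (by rw [← sq, hp.2.1])

theorem mul (hp : IsEvenInvolution p) (hq : IsEvenInvolution q) (h_ne : p ≠ q)
    (h_sq : (p * q) ^ 2 = 1) : IsEvenInvolution (p * q) :=
  ⟨fun h => h_ne <| by rw [eq_inv_of_mul_eq_one_left h, hq.inv_eq], h_sq,
    by rw [map_mul, hp.2.2, hq.2.2, one_mul]⟩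

end IsEvenInvolution

-- Bounded quantifiers evaluated as Booleans, which the kernel reduces much faster than the
-- default instances.
local instance {α : Type*} (l : List α) (P : α → Prop) [DecidablePred P] :
    Decidable (∀ x ∈ l, P x) :=
  decidable_of_iff (l.all fun x => P x) (by simp)

local instance {α : Type*} (l : List α) (P : α → Prop) [DecidablePred P] :
    Decidable (∃ x ∈ l, P x) :=
  decidable_of_iff (l.any fun x => P x) (by simp)

local instance (P : Perm (Fin 6) → Prop) [DecidablePred P] : Decidable (∃ s, P s) :=
  decidable_of_iff (∃ s ∈ permsOfList (List.finRange 6), P s) (by simp [mem_permsOfList_iff])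

/-- The products `(i j)(k l)` of two disjoint transpositions of six letters, each listed once, with
`i` its least moved letter. -/
def doubleTranspositions : List (Perm (Fin 6)) :=
  (List.finRange 6).flatMap fun i => (List.finRange 6).flatMap fun j =>
    (List.finRange 6).flatMap fun k => (List.finRange 6).flatMap fun l =>
      if i < j ∧ i < k ∧ k < l ∧ j ≠ k ∧ j ≠ l then [swap i j * swap k l] else []

theorem IsEvenInvolution.mem_doubleTranspositions :
    ∀ {p}, IsEvenInvolution p → p ∈ doubleTranspositions := by
  decide +kernel

/-- The involution to which the first entry of a triple is normalised by conjugation. -/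
def baseInvolution : Perm (Fin 6) := swap 0 1 * swap 2 3

/-- Representatives of the orbits of the centraliser of `baseInvolution` on
`doubleTranspositions`. -/
def centralizerOrbitReps : List (Perm (Fin 6)) :=
  [swap 0 1 * swap 2 3, swap 0 2 * swap 1 3, swap 0 1 * swap 4 5, swap 0 1 * swap 2 4,
    swap 0 2 * swap 1 4, swap 0 2 * swap 4 5, swap 0 4 * swap 1 5, swap 0 4 * swap 2 5]

theorem exists_conj_eq_baseInvolution :
    ∀ p ∈ doubleTranspositions, ∃ s, s⁻¹ * p * s = baseInvolution := by
  decide +kernel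

theorem exists_conj_mem_centralizerOrbitReps : ∀ q ∈ doubleTranspositions,
    ∃ s, s⁻¹ * baseInvolution * s = baseInvolution ∧ s⁻¹ * q * s ∈ centralizerOrbitReps := by
  decide +kernel

theorem exists_conjTriple_eq_normalForm {t : Perm (Fin 6) × Perm (Fin 6) × Perm (Fin 6)}
    (h₁ : IsEvenInvolution t.1) (h₂ : IsEvenInvolution t.2.1) (h₃ : IsEvenInvolution t.2.2) :
    ∃ s, ∃ b ∈ centralizerOrbitReps, ∃ c ∈ doubleTranspositions,
      conjTriple s t = (baseInvolution, b, c) := by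
  obtain ⟨r, hr⟩ := exists_conj_eq_baseInvolution _ h₁.mem_doubleTranspositions
  obtain ⟨s, hs, hb⟩ := exists_conj_mem_centralizerOrbitReps _
    ((isEvenInvolution_conj_iff _ r).mpr h₂).mem_doubleTranspositions
  refine ⟨r * s, _, hb, (r * s)⁻¹ * t.2.2 * (r * s),
    ((isEvenInvolution_conj_iff _ _).mpr h₃).mem_doubleTranspositions, ?_⟩
  have h_fst : (r * s)⁻¹ * t.1 * (r * s) = baseInvolution := by
    rw [← hs, ← hr]
    group
  have h_snd : (r * s)⁻¹ * t.2.1 * (r * s) = s⁻¹ * (r⁻¹ * t.2.1 * r) * s := by group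
  rw [conjTriple, h_fst, h_snd]

theorem exists_absEquiv_consTriple {k : ℕ} {P : Perm (Fin 6) → Prop}
    {Q : Perm (Fin 6) × Perm (Fin 6) × Perm (Fin 6) → Prop} (hP : ∀ p s, P p → P (s⁻¹ * p * s))
    (hPQ : ∀ b ∈ centralizerOrbitReps, ∀ c ∈ doubleTranspositions,
      P (baseInvolution * b * c) → ∃ t ∈ braidTranslates (baseInvolution, b, c), Q t)
    {t : Perm (Fin 6) × Perm (Fin 6) × Perm (Fin 6)} {u : Fin k → Perm (Fin 6)}
    (ht : ∀ i, IsEvenInvolution (consTriple t u i)) (hPt : P (t.1 * t.2.1 * t.2.2)) :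
    ∃ t' u', AbsEquiv (consTriple t u) (consTriple t' u') ∧ Q t' := by
  obtain ⟨s, b, hb, c, hc, h_eq⟩ := exists_conjTriple_eq_normalForm (ht 0) (ht 1) (ht 2)
  have h_conj : AbsEquiv (consTriple t u) (consTriple (conjTriple s t) fun i => s⁻¹ * u i * s) :=
    conj_consTriple s t u ▸ .conj s _
  have h_prod : s⁻¹ * (t.1 * t.2.1 * t.2.2) * s = baseInvolution * b * c := by
    simp only [conjTriple, Prod.mk.injEq] at h_eq
    rw [← h_eq.1, ← h_eq.2.1, ← h_eq.2.2]
    group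
  obtain ⟨t', ht', hQ⟩ := hPQ b hb c hc (h_prod ▸ hP _ s hPt)
  rw [h_eq] at h_conj
  exact ⟨t', _, h_conj.trans (HurwitzEquiv.of_mem_braidTranslates ht' _).absEquiv, hQ⟩

namespace IsAdmissible

variable {t : Perm (Fin 6) × Perm (Fin 6) × Perm (Fin 6)} {u : Fin 2 → Perm (Fin 6)}

theorem rotated_prod_eq_inv (h : IsAdmissible (consTriple t u)) :
    t.2.2 * u 0 * u 1 = (t.1 * t.2.1)⁻¹ :=
  eq_inv_of_mul_eq_one_right <| by
    have h_prod := h.prod_eq_one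
    rw [prod_ofFn_consTriple] at h_prod
    simpa [mul_assoc] using h_prod

theorem exists_absEquiv_rotated {P : Perm (Fin 6) → Prop}
    {Q : Perm (Fin 6) × Perm (Fin 6) × Perm (Fin 6) → Prop} (hP : ∀ p s, P p → P (s⁻¹ * p * s))
    (hPQ : ∀ b ∈ centralizerOrbitReps, ∀ c ∈ doubleTranspositions,
      P (baseInvolution * b * c) → ∃ t ∈ braidTranslates (baseInvolution, b, c), Q t)
    (h : IsAdmissible (consTriple t u)) (hPt : P (t.1 * t.2.1)⁻¹) :
    ∃ t' u', AbsEquiv (consTriple t u) (consTriple (k := 2) t' u') ∧ Q t' := by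
  have h_rotate := (HurwitzEquiv.rotate_consTriple h.prod_eq_one).absEquiv
  obtain ⟨t', u', h_equiv, hQ⟩ := exists_absEquiv_consTriple hP hPQ
    (h_rotate.isAdmissible_iff.mp h).isEvenInvolution (h.rotated_prod_eq_inv ▸ hPt)
  exact ⟨t', u', h_rotate.trans h_equiv, hQ⟩

end IsAdmissible

theorem exists_braidTranslate_sq_or_cube_eq_one :
    ∀ b ∈ centralizerOrbitReps, ∀ c ∈ doubleTranspositions,
      ∃ t ∈ braidTranslates (baseInvolution, b, c),
        (t.1 * t.2.1) ^ 2 = 1 ∨ (t.1 * t.2.1) ^ 3 = 1 := by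
  decide +kernel

theorem exists_braidTranslate_sq_eq_one :
    ∀ b ∈ centralizerOrbitReps, ∀ c ∈ doubleTranspositions, (baseInvolution * b * c) ^ 3 = 1 →
      ∃ t ∈ braidTranslates (baseInvolution, b, c), (t.1 * t.2.1) ^ 2 = 1 := by
  decide +kernel

/-- A triple, meant to consist of involutions, is linked if the products of its adjacent entries are
nontrivial and disjoint. These are the triples at which the search for equal adjacent entries
fails. -/
def IsLinked {α : Type*} (t : Perm α × Perm α × Perm α) : Prop :=
  t.1 ≠ t.2.1 ∧ t.2.1 ≠ t.2.2 ∧ (t.1 * t.2.1).Disjoint (t.2.1 * t.2.2)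

instance {α : Type*} [Fintype α] [DecidableEq α] : DecidablePred (IsLinked (α := α)) :=
  fun t => inferInstanceAs (Decidable (t.1 ≠ t.2.1 ∧ t.2.1 ≠ t.2.2 ∧
    ∀ x, (t.1 * t.2.1) x = x ∨ (t.2.1 * t.2.2) x = x))

theorem IsLinked.conj {α : Type*} {t : Perm α × Perm α × Perm α} (ht : IsLinked t) (s : Perm α) :
    IsLinked (conjTriple s t) := by
  obtain ⟨h₁₂, h₂₃, h_disjoint⟩ := ht
  refine ⟨by simpa [conjTriple], by simpa [conjTriple], ?_⟩
  simpa [conjTriple, mul_assoc] using h_disjoint.conj s⁻¹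

theorem exists_braidTranslate_eq_or_isLinked :
    ∀ b ∈ centralizerOrbitReps, ∀ c ∈ doubleTranspositions,
      IsEvenInvolution (baseInvolution * b * c) →
        ∃ t ∈ braidTranslates (baseInvolution, b, c), t.1 = t.2.1 ∨ IsLinked t := by
  decide +kernel

/-- The linked triple of even involutions of six letters, unique up to conjugation. -/
def linkedTriple : Perm (Fin 6) × Perm (Fin 6) × Perm (Fin 6) :=
  (swap 0 1 * swap 2 3, swap 1 4 * swap 2 3, swap 1 4 * swap 2 5)

theorem exists_conj_eq_linkedTriple : ∀ b ∈ centralizerOrbitReps, ∀ c ∈ doubleTranspositions,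
    IsLinked (baseInvolution, b, c) → ∃ s, conjTriple s (baseInvolution, b, c) = linkedTriple := by
  decide +kernel

namespace IsAdmissible

theorem exists_absEquiv_linkedTriple {k : ℕ} {t : Perm (Fin 6) × Perm (Fin 6) × Perm (Fin 6)}
    {u : Fin k → Perm (Fin 6)} (h : IsAdmissible (consTriple t u)) (ht : IsLinked t) :
    ∃ u', AbsEquiv (consTriple t u) (consTriple linkedTriple u') := by
  obtain ⟨r, b, hb, c, hc, h_normal⟩ := exists_conjTriple_eq_normalForm
    (h.isEvenInvolution 0) (h.isEvenInvolution 1) (h.isEvenInvolution 2)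
  obtain ⟨s, hs⟩ := exists_conj_eq_linkedTriple b hb c hc (h_normal ▸ ht.conj r)
  have h_conj := AbsEquiv.conj r (consTriple t u)
  rw [conj_consTriple, h_normal] at h_conj
  have h_conj' := AbsEquiv.conj s (consTriple (baseInvolution, b, c) fun i => r⁻¹ * u i * r)
  rw [conj_consTriple, hs] at h_conj'
  exact ⟨_, h_conj.trans h_conj'⟩

theorem exists_absEquiv_sq_eq_one {g : Fin 5 → Perm (Fin 6)} (hg : IsAdmissible g) :
    ∃ t, ∃ u : Fin 2 → Perm (Fin 6), AbsEquiv g (consTriple t u) ∧ (t.1 * t.2.1) ^ 2 = 1 := by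
  obtain ⟨t₀, u₀, rfl⟩ := exists_eq_consTriple g
  obtain ⟨t, u, h_equiv, h_sq | h_cube⟩ := exists_absEquiv_consTriple (P := fun _ => True)
    (fun _ _ => id) (fun b hb c hc _ => exists_braidTranslate_sq_or_cube_eq_one b hb c hc)
    hg.isEvenInvolution trivial
  · exact ⟨t, u, h_equiv, h_sq⟩
  · obtain ⟨t', u', h_equiv', h_sq⟩ := (h_equiv.isAdmissible_iff.mp hg).exists_absEquiv_rotated
      (P := fun p => p ^ 3 = 1)
      (fun p s hp => by simpa [hp] using conj_pow (i := 3) (a := s⁻¹) (b := p))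
      exists_braidTranslate_sq_eq_one
      (by rw [inv_pow, h_cube, inv_one])
    exact ⟨t', u', h_equiv.trans h_equiv', h_sq⟩

theorem exists_absEquiv_eq_or_linkedTriple {g : Fin 5 → Perm (Fin 6)} (hg : IsAdmissible g) :
    ∃ t, ∃ u : Fin 2 → Perm (Fin 6),
      AbsEquiv g (consTriple t u) ∧ (t.1 = t.2.1 ∨ t = linkedTriple) := by
  obtain ⟨t, u, h_equiv, h_sq⟩ := hg.exists_absEquiv_sq_eq_one
  by_cases h_eq : t.1 = t.2.1
  · exact ⟨t, u, h_equiv, .inl h_eq⟩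
  have h_adm := h_equiv.isAdmissible_iff.mp hg
  have h_inv : IsEvenInvolution (t.1 * t.2.1) :=
    (h_adm.isEvenInvolution 0).mul (h_adm.isEvenInvolution 1) h_eq h_sq
  obtain ⟨t', u', h_equiv', h_eq | h_linked⟩ := h_adm.exists_absEquiv_rotated
    (fun p s => (isEvenInvolution_conj_iff p s).mpr) exists_braidTranslate_eq_or_isLinked
    (h_inv.inv_eq.symm ▸ h_inv)
  · exact ⟨t', u', h_equiv.trans h_equiv', .inl h_eq⟩
  · obtain ⟨u'', h_equiv''⟩ :=
      (h_equiv'.isAdmissible_iff.mp h_adm).exists_absEquiv_linkedTriple h_linked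
    exact ⟨_, u'', (h_equiv.trans h_equiv').trans h_equiv'', .inr rfl⟩

theorem not_exists_invariant {k : ℕ} {g : Fin k → Perm (Fin 6)} (hg : IsAdmissible g) :
    ¬ ∃ S : Finset (Fin 6), S.Nonempty ∧ S ≠ Finset.univ ∧ ∀ i, ∀ x ∈ S, g i x ∈ S := by
  rintro ⟨S, ⟨x, hx⟩, h_ne, hS⟩
  refine h_ne (Finset.eq_univ_iff_forall.mpr fun y => ?_)
  obtain ⟨p, hp, rfl⟩ := hg.exists_apply_eq x y
  exact MulAction.mem_stabilizer_finset'.mp (closure_range_le_stabilizer hS hp) hx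

end IsAdmissible

/-- A triple whose `doubled` tuple generates the rotation group of the octahedron, acting on its six
pairs of opposite edges. -/
def octahedralTriple : Perm (Fin 6) × Perm (Fin 6) × Perm (Fin 6) :=
  (swap 0 1 * swap 2 3, swap 1 3 * swap 4 5, swap 1 4 * swap 3 5)

/-- A triple whose `doubled` tuple generates the rotation group of the icosahedron, acting on its
six axes through opposite vertices. -/
def icosahedralTriple : Perm (Fin 6) × Perm (Fin 6) × Perm (Fin 6) :=
  (swap 0 1 * swap 2 3, swap 0 4 * swap 1 2, swap 0 4 * swap 3 5)

theorem exists_invariant_or_conj_cycleTail : ∀ b ∈ centralizerOrbitReps,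
    ∀ c ∈ doubleTranspositions, IsEvenInvolution (b * c) →
      (∃ S : Finset (Fin 6), S.Nonempty ∧ S ≠ Finset.univ ∧
        ∀ i, ∀ x ∈ S, doubled (baseInvolution, b, c) i x ∈ S) ∨
      ∃ s, ∃ t ∈ [octahedralTriple, icosahedralTriple], ∃ n ∈ List.range 3,
        conjTriple s (baseInvolution, b, c) = cycleTail^[n] t := by
  decide +kernel

theorem IsAdmissible.exists_absEquiv_doubled {t : Perm (Fin 6) × Perm (Fin 6) × Perm (Fin 6)}
    (h : IsAdmissible (doubled t)) :
    ∃ t' ∈ [octahedralTriple, icosahedralTriple], AbsEquiv (doubled t) (doubled t') := by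
  obtain ⟨r, b, hb, c, hc, h_normal⟩ := exists_conjTriple_eq_normalForm
    (h.isEvenInvolution 0) (h.isEvenInvolution 2) (h.isEvenInvolution 3)
  have h_conj := AbsEquiv.conj r (doubled t)
  rw [conj_doubled, h_normal] at h_conj
  have h_adm := h_conj.isAdmissible_iff.mp h
  have h_bc : IsEvenInvolution (b * c) := by
    have h_last : IsEvenInvolution (b * c)⁻¹ := h_adm.isEvenInvolution 4
    rwa [← h_last.inv_eq, inv_inv] at h_last
  obtain ⟨s, t', ht', n, -, h_eq⟩ :=
    (exists_invariant_or_conj_cycleTail b hb c hc h_bc).resolve_left h_adm.not_exists_invariant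
  have h_conj' := AbsEquiv.conj s (doubled (baseInvolution, b, c))
  rw [conj_doubled, h_eq] at h_conj'
  exact ⟨t', ht', (h_conj.trans h_conj').trans
    (HurwitzEquiv.doubled_cycleTail_iterate n t').absEquiv.symm⟩

theorem IsAdmissible.consTriple_eq_doubled {t : Perm (Fin 6) × Perm (Fin 6) × Perm (Fin 6)}
    {u : Fin 2 → Perm (Fin 6)} (h : IsAdmissible (consTriple t u)) (h_eq : t.1 = t.2.1) :
    consTriple t u = doubled (t.1, t.2.2, u 0) := by
  have h_sq : t.1 * t.1 = 1 := by rw [← sq]; exact (h.isEvenInvolution 0).2.1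
  have h_last : u 1 = (t.2.2 * u 0)⁻¹ := by
    apply eq_inv_of_mul_eq_one_right
    rw [h.rotated_prod_eq_inv, ← h_eq, h_sq, inv_one]
  ext i : 1
  fin_cases i
  exacts [rfl, h_eq.symm, rfl, rfl, h_last]

/-- The two pairs of commuting involutions that complete `linkedTriple` to product one. -/
def linkedTail : Fin 2 → Fin 2 → Perm (Fin 6) :=
  ![![swap 0 1 * swap 3 4, swap 2 5 * swap 3 4], ![swap 0 2 * swap 1 5, swap 0 5 * swap 1 2]]

theorem commute_and_eq_linkedTail : ∀ x ∈ doubleTranspositions, ∀ y ∈ doubleTranspositions,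
    linkedTriple.1 * linkedTriple.2.1 * linkedTriple.2.2 * (x * y) = 1 →
      y⁻¹ * x * y = x ∧ ∃ m, ![x, y] = linkedTail m ∨ ![y, x] = linkedTail m := by
  decide +kernel

theorem absEquiv_linkedTail :
    AbsEquiv (consTriple linkedTriple (linkedTail 0)) (consTriple linkedTriple (linkedTail 1)) := by
  have h_tail (t : Perm (Fin 6) × Perm (Fin 6) × Perm (Fin 6)) :
      HurwitzEquiv (consTriple t ![]) (consTriple (braidFst^[2] (braidSnd^[2] t)) ![]) :=
    (HurwitzEquiv.braidSnd_iterate 2 t ![]).trans (HurwitzEquiv.braidFst_iterate 2 _ ![])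
  have h_braid := (HurwitzEquiv.consTriple_pull linkedTriple (linkedTail 0)).trans
    (((h_tail _).cons _).cons _)
  exact h_braid.absEquiv.trans <| .rel _ _ <| .inr <| by decide +kernel

namespace IsAdmissible

theorem absEquiv_consTriple_linkedTail {u : Fin 2 → Perm (Fin 6)}
    (h : IsAdmissible (consTriple linkedTriple u)) :
    AbsEquiv (consTriple linkedTriple u) (consTriple linkedTriple (linkedTail 0)) := by
  obtain ⟨x, y, rfl⟩ : ∃ x y, u = ![x, y] := ⟨_, _, (FinVec.etaExpand_eq u).symm⟩
  have h_prod := h.prod_eq_one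
  rw [prod_ofFn_consTriple] at h_prod
  obtain ⟨h_comm, m, h_tail⟩ := commute_and_eq_linkedTail x
    (h.isEvenInvolution 3).mem_doubleTranspositions y
    (h.isEvenInvolution 4).mem_doubleTranspositions (by simpa using h_prod)
  have h_swap : AbsEquiv (consTriple linkedTriple ![x, y]) (consTriple linkedTriple ![y, x]) := by
    simpa [h_comm, consTriple] using
      ((((HurwitzEquiv.cons_cons x y ![]).cons _).cons _).cons _).absEquiv
  have h_tails : AbsEquiv (consTriple linkedTriple (linkedTail m))
      (consTriple linkedTriple (linkedTail 0)) := by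
    fin_cases m
    exacts [.refl _, absEquiv_linkedTail.symm]
  obtain h_tail | h_tail := h_tail
  · rwa [h_tail]
  · exact h_swap.trans (h_tail ▸ h_tails)

end IsAdmissible

/-- Representatives of the three classes of admissible quintuples. -/
def classRep : Fin 3 → Fin 5 → Perm (Fin 6) :=
  ![doubled octahedralTriple, doubled icosahedralTriple, consTriple linkedTriple (linkedTail 0)]

theorem IsAdmissible.exists_absEquiv_classRep {g : Fin 5 → Perm (Fin 6)} (hg : IsAdmissible g) :
    ∃ m, AbsEquiv g (classRep m) := by
  obtain ⟨t, u, h_equiv, h⟩ := hg.exists_absEquiv_eq_or_linkedTriple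
  have h_adm := h_equiv.isAdmissible_iff.mp hg
  obtain h_eq | rfl := h
  · rw [h_adm.consTriple_eq_doubled h_eq] at h_equiv h_adm
    obtain ⟨t', ht', h_doubled⟩ := h_adm.exists_absEquiv_doubled
    simp only [List.mem_cons, List.not_mem_nil, or_false] at ht'
    obtain rfl | rfl := ht'
    exacts [⟨0, h_equiv.trans h_doubled⟩, ⟨1, h_equiv.trans h_doubled⟩]
  · exact ⟨2, h_equiv.trans h_adm.absEquiv_consTriple_linkedTail⟩

theorem card_closure_classRep_zero : Nat.card (Subgroup.closure (Set.range (classRep 0))) = 24 :=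
  (card_closure_range_eq_of_wordOrbit_subset (n := 4) (by decide +kernel)).trans
    (by decide +kernel)

theorem card_closure_classRep_one : Nat.card (Subgroup.closure (Set.range (classRep 1))) = 60 :=
  (card_closure_range_eq_of_wordOrbit_subset (n := 6) (by decide +kernel)).trans
    (by decide +kernel)

theorem mem_wordOrbit_classRep_two :
    ∀ x y : Fin 6, x ≠ y → (x, y) ∈ wordOrbit (classRep 2) 6 ((0, 1) : Fin 6 × Fin 6) := by
  decide +kernel

theorem closure_classRep_two :
    Subgroup.closure (Set.range (classRep 2)) = alternatingGroup (Fin 6) := by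
  have h_even : ∀ i, classRep 2 i ∈ alternatingGroup (Fin 6) := by
    simp only [mem_alternatingGroup]
    decide +kernel
  have h_cycle : (classRep 2 0 * classRep 2 1).IsThreeCycle :=
    card_support_eq_three_iff.mp (by decide +kernel)
  have h_prim := MulAction.isPreprimitive_of_is_two_pretransitive
    (isMultiplyPretransitive_closure_of_mem_wordOrbit mem_wordOrbit_classRep_two)
  refine le_antisymm ((Subgroup.closure_le _).mpr (Set.range_subset_iff.mpr h_even)) ?_
  exact alternatingGroup_le_of_isPreprimitive_of_isThreeCycle_mem h_prim h_cycle <|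
    mul_mem (Subgroup.subset_closure ⟨0, rfl⟩) (Subgroup.subset_closure ⟨1, rfl⟩)

theorem card_closure_classRep (m : Fin 3) :
    Nat.card (Subgroup.closure (Set.range (classRep m))) = ![24, 60, 360] m := by
  have h_two : Nat.card (alternatingGroup (Fin 6)) = 360 := by
    rw [nat_card_alternatingGroup, Nat.card_fin]
    rfl
  fin_cases m
  exacts [card_closure_classRep_zero, card_closure_classRep_one, closure_classRep_two ▸ h_two]

theorem isAdmissible_of_orderOf_eq_two {k : ℕ} {g : Fin k → Perm (Fin 6)}
    (h_mem : ∀ i, g i ∈ alternatingGroup (Fin 6)) (h_ord : ∀ i, orderOf (g i) = 2)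
    (h_prod : (List.ofFn g).prod = 1)
    (h_trans : ∀ x y : Fin 6, ∃ p ∈ Subgroup.closure (Set.range g), p x = y) :
    IsAdmissible g :=
  ⟨fun i => isEvenInvolution_of_orderOf_eq_two (h_mem i) (h_ord i), h_prod, h_trans⟩

end Classification

/-- A `5`-tuple of order-2 elements of `A₆` with product `1` whose generated
subgroup is transitive on the `6` letters generates a subgroup of order `24`,
`60`, or `360` (in which case it is all of `A₆`); moreover any two such tuples
whose generated subgroups have equal order are related by the equivalence
relation generated by Hurwitz moves and simultaneous `S₆`-conjugation. -/
theorem stmt_16 (g : Fin 5 → Equiv.Perm (Fin 6))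
    (hmem : ∀ i, g i ∈ alternatingGroup (Fin 6))
    (hord : ∀ i, orderOf (g i) = 2)
    (hprod : (List.ofFn g).prod = 1)
    (htrans : ∀ x y : Fin 6, ∃ p ∈ Subgroup.closure (Set.range g), p x = y) :
    (Nat.card (Subgroup.closure (Set.range g)) = 24 ∨
     Nat.card (Subgroup.closure (Set.range g)) = 60 ∨
     (Nat.card (Subgroup.closure (Set.range g)) = 360 ∧
       Subgroup.closure (Set.range g) = alternatingGroup (Fin 6))) ∧
    ∀ g' : Fin 5 → Equiv.Perm (Fin 6),
      (∀ i, g' i ∈ alternatingGroup (Fin 6)) → (∀ i, orderOf (g' i) = 2) →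
      (List.ofFn g').prod = 1 →
      (∀ x y : Fin 6, ∃ p ∈ Subgroup.closure (Set.range g'), p x = y) →
      Nat.card (Subgroup.closure (Set.range g))
        = Nat.card (Subgroup.closure (Set.range g')) →
      Relation.EqvGen (AbsRel 5) g g' := by
  have hg := isAdmissible_of_orderOf_eq_two hmem hord hprod htrans
  obtain ⟨m, h_equiv⟩ := hg.exists_absEquiv_classRep
  have h_card := h_equiv.card_closure_eq.trans (card_closure_classRep m)
  refine ⟨?_, fun g' hmem' hord' hprod' htrans' h_card_eq => ?_⟩
  · fin_cases m
    · exact .inl h_card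
    · exact .inr (.inl h_card)
    · have h_le : Subgroup.closure (Set.range g) ≤ alternatingGroup (Fin 6) :=
        (Subgroup.closure_le _).mpr (Set.range_subset_iff.mpr hmem)
      refine .inr (.inr ⟨h_card, Subgroup.eq_of_le_of_card_ge h_le ?_⟩)
      exact ((closure_classRep_two ▸ card_closure_classRep 2).trans h_card.symm).le
  · have hg' := isAdmissible_of_orderOf_eq_two hmem' hord' hprod' htrans'
    obtain ⟨m', h_equiv'⟩ := hg'.exists_absEquiv_classRep
    have h_card' := h_equiv'.card_closure_eq.trans (card_closure_classRep m')
    obtain rfl : m = m' := (by decide : Function.Injective ![24, 60, 360])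
      (h_card.symm.trans (h_card_eq.trans h_card'))
    exact h_equiv.trans h_equiv'.symm
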